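/- For every a ∈ ℤ/Mℤ, writing [P] for 1 if P holds and 0 otherwise: #{(i, j) ∈ T_1 × T_2 : i − j = a} = 2^{s−1}·[−a ∈ T_1] + 2^{s−1} − 2^{s−1}·[a = 0], and #{(i, j) ∈ T_1 × T_3 : i − j = a} = −2^{s−1}·[−a ∈ T_1] + 2^{s−1} − 2^{s−1}·[a = 0]; that is, T_1·T_2^{(−1)} = 2^{s−1}T_1^{(−1)} + 2^{s−1}ℤ/Mℤ − 2^{s−1} and T_1·T_3^{(−1)} = −2^{s−1}T_1^{(−1)} + 2^{s−1}ℤ/Mℤ − 2^{s−1} in the group ring ℤ[ℤ/Mℤ]. -/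

import Mathlib

noncomputable section

open scoped BigOperators

/-- `M = 2^{2s} + 2^s + 1`. -/
abbrev Mof (s : ℕ) : ℕ := 2 ^ (2 * s) + 2 ^ s + 1

/-- The relative trace from `F` (of order `2^{3s}`) to its subfield `E` of order `2^s`:
`Tr_{F/E}(x) = x + x^{2^s} + x^{2^{2s}}`, viewed as a map `F → F`. -/
def trFE {F : Type*} [Field F] (s : ℕ) (x : F) : F :=
  x + x ^ (2 ^ s) + x ^ (2 ^ (2 * s))

/-- `ψ(x) = 1` if the absolute trace `Tr_{F/𝔽₂}(x) = 0`, and `-1` otherwise. -/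
def psi (F : Type*) [Field F] [Algebra (ZMod 2) F] (x : F) : ℤ :=
  if Algebra.trace (ZMod 2) F x = 0 then 1 else -1

/-- `ψ(cS) = ∑_{x ∈ S} ψ(c·x)`. -/
def psiSum (F : Type*) [Field F] [Algebra (ZMod 2) F] (c : F) (S : Set F) : ℤ :=
  ∑ᶠ x ∈ S, psi F (c * x)

/-- `D = {u ∈ F^× : Tr_{F/E}(u⁻¹) = 0}`. -/
def Dset (F : Type*) [Field F] (s : ℕ) : Set F :=
  {u | u ≠ 0 ∧ trFE s u⁻¹ = 0}

/-- `S_a = {u ∈ F^× : Tr_{F/E}(u^{2^s+1}) = 0 ∧ Tr_{F/E}(ω^a u) = 0}`. -/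
def Sa {F : Type*} [Field F] (s : ℕ) (ω : F) (a : ℤ) : Set F :=
  {u | u ≠ 0 ∧ trFE s (u ^ (2 ^ s + 1)) = 0 ∧ trFE s (ω ^ a * u) = 0}

/-- `T₁ ⊆ ℤ/Mℤ`: classes `a` with `|S_a| = 2^s - 1`. -/
def T1 {F : Type*} [Field F] (s : ℕ) (ω : F) : Set (ZMod (Mof s)) :=
  {x | (Sa s ω (x.val : ℤ)).ncard = 2 ^ s - 1}

/-- `T₂ ⊆ ℤ/Mℤ`: classes `a` with `|S_a| = 2(2^s - 1)`. -/
def T2 {F : Type*} [Field F] (s : ℕ) (ω : F) : Set (ZMod (Mof s)) :=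
  {x | (Sa s ω (x.val : ℤ)).ncard = 2 * (2 ^ s - 1)}

/-- `T₃ ⊆ ℤ/Mℤ`: classes `a` with `|S_a| = 0`. -/
def T3 {F : Type*} [Field F] (s : ℕ) (ω : F) : Set (ZMod (Mof s)) :=
  {x | (Sa s ω (x.val : ℤ)).ncard = 0}

/-- The cyclotomic class `C_i^{(M,K)} = {g^{i+Mt} : t ∈ ℤ}`. -/
def cyc {K : Type*} [Field K] (M : ℕ) (g : K) (i : ℤ) : Set K :=
  {x | ∃ t : ℤ, x = g ^ (i + (M : ℤ) * t)}

/-- `⋃_{i ∈ T} C_i^{(M,K)}` for a set `T ⊆ ℤ/Mℤ` of indices. -/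
def Rclass {K : Type*} [Field K] (s : ℕ) (g : K) (T : Set (ZMod (Mof s))) : Set K :=
  ⋃ i ∈ T, cyc (Mof s) g ((i.val : ℤ))

/-- The family `R_0 = {0}`, `R_k = ⋃_{i ∈ T_k} C_i^{(M,K)}`, `k = 1, 2, 3`. -/
def Rfam {F K : Type*} [Field F] [Field K] (s : ℕ) (ω : F) (g : K) : Fin 4 → Set K :=
  ![{0}, Rclass s g (T1 s ω), Rclass s g (T2 s ω), Rclass s g (T3 s ω)]

/-- Indicator `[P] = 1` if `P` holds, `0` otherwise. -/
def Ind (P : Prop) : ℤ := @ite ℤ P (Classical.propDecidable P) 1 0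

/-!
Let `q = 2 ^ s`. The quadratic form `Q u = Tr (u ^ (q + 1))` defines a conic in the projective plane
of `F` over `E`, and since `q` is even all its tangents pass through one point, the nucleus `1`. The
line `Tr (ω ^ a * u) = 0` is a tangent, a secant or an external line according to whether `a` lies
in `T₁`, `T₂` or `T₃`. As tangents pass through `1`, membership in `T₁` amounts to `Tr (ω ^ a) = 0`,
so the pairs in `T₁ × T₂` and `T₁ × T₃` with difference `a` are the secants and the external lines
through the point `ω ^ a`.

Counting zeros of `Q` on the lines through `ω ^ a` shows that the secants outnumber the external
lines by `q` if `ω ^ a` is on the conic, and are equally many otherwise. By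
`Q x = N x * Tr x⁻¹`, the point `ω ^ a` is on the conic iff `-a ∈ T₁`. Together the secants and
external lines through `ω ^ a` are its non-tangent lines: there are `q` of them, or none if
`ω ^ a` is the nucleus, that is, if `a = 0`.
-/

section Conic

open Module QuadraticMap

variable {E V : Type*} [Field E] [AddCommGroup V] [Module E V]

/-- The vector `n` spans the nucleus of the quadric `Q = 0`, the common point of all its tangent
hyperplanes: the polar form of `Q` has radical spanned by `n`, and `Q` does not vanish at `n`.
As `polar Q n n = 2 * Q n`, this forces characteristic two. -/
structure IsNucleus (Q : QuadraticForm E V) (n : V) : Prop where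
  ker_polarBilin : LinearMap.ker Q.polarBilin = Submodule.span E {n}
  map_ne_zero : Q n ≠ 0

/-- The number of vectors of the cone `Q = 0` lying on the hyperplane `f = 0`. For a conic over a
field with `q` elements it is `1` on external lines, `q` on tangents and `2 * q - 1` on secants. -/
def zeroCount (Q : QuadraticForm E V) (f : Dual E V) : ℕ :=
  {v | Q v = 0 ∧ f v = 0}.ncard

/-- The functionals `f` with `f x = 0` whose hyperplane carries exactly `k` zeros of `Q`, that is,
the lines of type `k` through the point `x`. -/
def pencil (Q : QuadraticForm E V) (x : V) (k : ℕ) : Set (Dual E V) :=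
  {f | f x = 0 ∧ zeroCount Q f = k}

theorem zeroCount_eq_ncard_restrict (Q : QuadraticForm E V) (f : Dual E V) :
    zeroCount Q f = {w | Q.restrict (LinearMap.ker f) w = 0}.ncard := by
  rw [zeroCount, ← Set.ncard_image_of_injective _ (LinearMap.ker f).injective_subtype]
  congr 1
  ext v
  simp [and_comm]

theorem zeroCount_smul (Q : QuadraticForm E V) {e : E} (he : e ≠ 0) (f : Dual E V) :
    zeroCount Q (e • f) = zeroCount Q f := by
  simp [zeroCount, he]

theorem IsNucleus.polar_eq_zero {Q : QuadraticForm E V} {n : V} (h : IsNucleus Q n) (v : V) :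
    polar Q n v = 0 := by
  have hn : n ∈ LinearMap.ker Q.polarBilin := h.ker_polarBilin ▸ Submodule.mem_span_singleton_self n
  exact DFunLike.congr_fun (LinearMap.mem_ker.1 hn) v

theorem charP_two_of_polar_self_eq_zero {Q : QuadraticForm E V} {n : V}
    (hpolar : polar Q n n = 0) (hn : Q n ≠ 0) : CharP E 2 := by
  rw [polar_self, two_nsmul, ← two_mul, mul_eq_zero, or_iff_left hn] at hpolar
  exact CharTwo.of_one_ne_zero_of_two_eq_zero one_ne_zero hpolar

/-- Each line parallel to `n` meets the cone `Q = 0` exactly once, because squaring is bijective. -/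
theorem ncard_zeros_mul_card [Finite E] {Q : QuadraticForm E V} {n : V}
    (hpolar : ∀ v, polar Q n v = 0) (hn : Q n ≠ 0) :
    {v | Q v = 0}.ncard * Nat.card E = Nat.card V := by
  have := charP_two_of_polar_self_eq_zero (hpolar n) hn
  have map_add_smul (v : V) (e : E) : Q (v + e • n) = Q v + e ^ 2 * Q n := by
    rw [QuadraticMap.map_add Q, polar_smul_right, polar_comm, hpolar, smul_zero, add_zero,
      QuadraticMap.map_smul, smul_eq_mul, pow_two]
  rw [← Nat.card_coe_set_eq, ← Nat.card_prod]
  refine Nat.card_congr (.ofBijective (fun p ↦ (p.1 : V) + p.2 • n) ⟨?_, fun w ↦ ?_⟩)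
  · rintro ⟨⟨v, hv : Q v = 0⟩, e⟩ ⟨⟨v', hv' : Q v' = 0⟩, e'⟩ (h : v + e • n = v' + e' • n)
    have hQ := congrArg Q h
    rw [map_add_smul, map_add_smul, hv, hv', zero_add, zero_add] at hQ
    obtain rfl : e = e' := CharTwo.sq_injective (mul_right_cancel₀ hn hQ)
    obtain rfl : v = v' := add_right_cancel h
    rfl
  · obtain ⟨e, he⟩ := isSquare_of_charTwo' (Q w / Q n)
    have hQw : Q (w + e • n) = 0 := by
      rw [map_add_smul, pow_two, ← he, div_mul_cancel₀ _ hn, CharTwo.add_self_eq_zero]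
    refine ⟨(⟨w + e • n, hQw⟩, e), ?_⟩
    simp only [add_assoc, ← add_smul, CharTwo.add_self_eq_zero, zero_smul, add_zero]

theorem ncard_mul_eq_zero [Finite E] :
    {p : E × E | p.1 * p.2 = 0}.ncard = 2 * Nat.card E - 1 := by
  have hunion : {p : E × E | p.1 * p.2 = 0} = {0} ×ˢ Set.univ ∪ Set.univ ×ˢ {0} := by
    ext; simp
  have hinter : ({0} ×ˢ Set.univ ∩ Set.univ ×ˢ {0} : Set (E × E)) = {0} := by
    ext; simp [Prod.ext_iff]
  have := Set.ncard_union_add_ncard_inter (({0} : Set E) ×ˢ Set.univ) (Set.univ ×ˢ ({0} : Set E))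
  rw [← hunion, hinter, Set.ncard_prod, Set.ncard_prod, Set.ncard_univ, Set.ncard_singleton,
    Set.ncard_singleton] at this
  omega

/-- In suitable coordinates such a form is the hyperbolic plane `(a, b) ↦ a * b`, up to a scalar. -/
theorem ncard_zeros_of_finrank_eq_two [Finite E] (hV : finrank E V = 2) {Q : QuadraticForm E V}
    {u v : V} (hu : Q u = 0) (huv : polar Q u v ≠ 0) :
    {w | Q w = 0}.ncard = 2 * Nat.card E - 1 := by
  have : FiniteDimensional E V := .of_finrank_eq_succ hV
  set w := v - (Q v / polar Q u v) • u with hw_def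
  have hw : Q w = 0 := by
    rw [hw_def, sub_eq_add_neg, QuadraticMap.map_add Q, QuadraticMap.map_neg, QuadraticMap.map_smul,
      hu, polar_neg_right, polar_smul_right, polar_comm Q v u, smul_zero,
      add_zero, smul_eq_mul, div_mul_cancel₀ _ huv, add_neg_cancel]
  have huw : polar Q u w = polar Q u v := by
    rw [polar_sub_right, polar_smul_right, polar_self, hu]
    simp
  let coords : E × E →ₗ[E] V := (LinearMap.toSpanSingleton E V u).coprod (.toSpanSingleton E V w)
  have hQ (p : E × E) : Q (coords p) = p.1 * p.2 * polar Q u v := by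
    simp [coords, QuadraticMap.map_add Q, QuadraticMap.map_smul, hu, hw, huw, mul_assoc,
      mul_left_comm]
  have hinj : Function.Injective coords := by
    rw [injective_iff_map_eq_zero]
    intro p hp
    have h₁ : polar Q (coords p) w = p.1 * polar Q u v := by
      simp [coords, polar_add_left, polar_smul_left, polar_self, hw, huw]
    have h₂ : polar Q u (coords p) = p.2 * polar Q u v := by
      simp [coords, polar_add_right, polar_smul_right, polar_self, hu, huw]
    rw [hp, polar_zero_left, zero_eq_mul, or_iff_left huv] at h₁
    rw [hp, polar_zero_right, zero_eq_mul, or_iff_left huv] at h₂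
    exact Prod.ext h₁ h₂
  have hsurj : Function.Surjective coords :=
    (LinearMap.injective_iff_surjective_of_finrank_eq_finrank (by simp [hV])).1 hinj
  rw [← ncard_mul_eq_zero, ← Set.ncard_image_of_injective _ hinj]
  congr 1
  ext y
  obtain ⟨p, rfl⟩ := hsurj y
  simp only [Set.mem_ofPred_eq, hinj.mem_set_image, hQ, mul_eq_zero, or_iff_left huv]

theorem IsNucleus.exists_polar_ne_zero {Q : QuadraticForm E V} {n : V} (hn : IsNucleus Q n)
    {f : Dual E V} (hfn : f n ≠ 0) {u : V} (hu : u ≠ 0) (hfu : f u = 0) :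
    ∃ v, f v = 0 ∧ polar Q u v ≠ 0 := by
  by_contra! h
  have hmem : u ∈ LinearMap.ker Q.polarBilin := by
    refine LinearMap.mem_ker.2 (LinearMap.ext fun v ↦ ?_)
    have hproj : f (v - (f v / f n) • n) = 0 := by simp [hfn]
    have := h _ hproj
    rwa [polar_sub_right, polar_smul_right, polar_comm Q u n, hn.polar_eq_zero, smul_zero,
      sub_zero] at this
  obtain ⟨e, rfl⟩ := Submodule.mem_span_singleton.1 (hn.ker_polarBilin ▸ hmem)
  rw [map_smul, smul_eq_mul, mul_eq_zero, or_iff_left hfn] at hfu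
  exact hu (by rw [hfu, zero_smul])

theorem card_dualAnnihilator [FiniteDimensional E V] (W : Subspace E V) :
    Nat.card W.dualAnnihilator = Nat.card E ^ (finrank E V - finrank E W) := by
  have := Subspace.finrank_add_finrank_dualAnnihilator_eq W
  rw [natCard_eq_pow_finrank (K := E)]
  congr 1
  omega

theorem ncard_apply_eq_zero_and_apply_eq_zero (hV : finrank E V = 3) {x y : V} (hx : x ≠ 0)
    [Decidable (y ∈ Submodule.span E {x})] :
    {f : Dual E V | f x = 0 ∧ f y = 0}.ncard =
      if y ∈ Submodule.span E {x} then Nat.card E ^ 2 else Nat.card E := by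
  have : FiniteDimensional E V := .of_finrank_eq_succ hV
  have hset : {f : Dual E V | f x = 0 ∧ f y = 0} =
      (Submodule.span E {x} ⊔ Submodule.span E {y}).dualAnnihilator := by
    ext f
    simp [Submodule.dualAnnihilator_sup_eq]
  rw [hset, ← Nat.card_coe_set_eq]
  refine (card_dualAnnihilator _).trans ?_
  split_ifs with hy
  · rw [sup_of_le_left ((Submodule.span_singleton_le_iff_mem _ _).2 hy), finrank_span_singleton hx,
      hV]
  · rw [Submodule.finrank_sup_span_singleton hy, finrank_span_singleton hx, hV, pow_one]

theorem ncard_apply_eq_zero (hV : finrank E V = 3) {x : V} (hx : x ≠ 0) :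
    {f : Dual E V | f x = 0}.ncard = Nat.card E ^ 2 := by
  classical simpa using ncard_apply_eq_zero_and_apply_eq_zero (y := x) hV hx

open Classical in
theorem ncard_eq_zero_and_mem_span (Q : QuadraticForm E V) {x : V} (hx : x ≠ 0) :
    {v | Q v = 0 ∧ v ∈ Submodule.span E {x}}.ncard = if Q x = 0 then Nat.card E else 1 := by
  split_ifs with hQx
  · have hspan : {v | Q v = 0 ∧ v ∈ Submodule.span E {x}} = Set.range fun e : E ↦ e • x := by
      ext v
      simp only [Set.mem_ofPred_eq, Submodule.mem_span_singleton, Set.mem_range]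
      refine and_iff_right_of_imp ?_
      rintro ⟨e, rfl⟩
      rw [QuadraticMap.map_smul, hQx, smul_zero]
    rw [hspan, ← Nat.card_coe_set_eq, Nat.card_range_of_injective (smul_left_injective E hx)]
  · refine Set.ncard_eq_one.2 ⟨0, Set.ext fun v ↦ ⟨?_, ?_⟩⟩
    · rintro ⟨hv, hmem⟩
      obtain ⟨e, rfl⟩ := Submodule.mem_span_singleton.1 hmem
      rw [QuadraticMap.map_smul, smul_eq_mul, mul_eq_zero, or_iff_left hQx, mul_self_eq_zero] at hv
      simp [hv]
    · rintro rfl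
      exact ⟨map_zero Q, Submodule.zero_mem _⟩

variable [Finite E]

theorem zeroCount_eq_card_of_apply_nucleus_eq_zero (hV : finrank E V = 3) {Q : QuadraticForm E V}
    {n : V} (hn : IsNucleus Q n) {f : Dual E V} (hf : f ≠ 0) (hfn : f n = 0) :
    zeroCount Q f = Nat.card E := by
  have : FiniteDimensional E V := .of_finrank_eq_succ hV
  have hker : finrank E (LinearMap.ker f) = 2 := by
    have := Dual.finrank_ker_add_one_of_ne_zero hf
    omega
  have hcount := ncard_zeros_mul_card (Q := Q.restrict (LinearMap.ker f)) (n := ⟨n, hfn⟩)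
    (fun v ↦ hn.polar_eq_zero v) hn.map_ne_zero
  rw [natCard_eq_pow_finrank (K := E) (V := LinearMap.ker f), hker, pow_two] at hcount
  rw [zeroCount_eq_ncard_restrict]
  exact Nat.eq_of_mul_eq_mul_right Nat.card_pos hcount

theorem zeroCount_eq_of_apply_nucleus_ne_zero (hV : finrank E V = 3) {Q : QuadraticForm E V}
    {n : V} (hn : IsNucleus Q n) {f : Dual E V} (hfn : f n ≠ 0) :
    zeroCount Q f = 1 ∨ zeroCount Q f = 2 * Nat.card E - 1 := by
  have : FiniteDimensional E V := .of_finrank_eq_succ hV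
  by_cases h : ∃ u, u ≠ 0 ∧ Q u = 0 ∧ f u = 0
  · obtain ⟨u, hu, hQu, hfu⟩ := h
    obtain ⟨v, hfv, huv⟩ := hn.exists_polar_ne_zero hfn hu hfu
    have hker : finrank E (LinearMap.ker f) = 2 := by
      have := Dual.finrank_ker_add_one_of_ne_zero (f := f) (by rintro rfl; exact hfn rfl)
      omega
    rw [zeroCount_eq_ncard_restrict]
    exact .inr (ncard_zeros_of_finrank_eq_two hker (u := ⟨u, hfu⟩) (v := ⟨v, hfv⟩) hQu huv)
  · push Not at h
    refine .inl (Set.ncard_eq_one.2 ⟨0, Set.ext fun v ↦ ⟨fun hv ↦ ?_, ?_⟩⟩)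
    · by_contra hv₀
      exact h v hv₀ hv.1 hv.2
    · rintro rfl
      exact ⟨map_zero Q, map_zero f⟩

variable {Q : QuadraticForm E V} {n x : V} (hV : finrank E V = 3) (hn : IsNucleus Q n)

include hV hn

theorem zeroCount_zero : zeroCount Q 0 = Nat.card E ^ 2 := by
  have hcount := ncard_zeros_mul_card hn.polar_eq_zero hn.map_ne_zero
  have : FiniteDimensional E V := .of_finrank_eq_succ hV
  rw [natCard_eq_pow_finrank (K := E) (V := V), hV, pow_succ] at hcount
  simpa [zeroCount] using Nat.eq_of_mul_eq_mul_right Nat.card_pos hcount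

/-- For `q = Nat.card E` the three possible values `1`, `q`, `2 * q - 1` of `zeroCount` at a nonzero
functional are in arithmetic progression. -/
theorem zeroCount_eq [DecidableEq (Dual E V)] (f : Dual E V) :
    (zeroCount Q f : ℤ) = Nat.card E + (Nat.card E - 1) * (Nat.card E * (if f = 0 then 1 else 0) +
      (if zeroCount Q f = 2 * Nat.card E - 1 then 1 else 0) -
      (if zeroCount Q f = 1 then 1 else 0)) := by
  have hq : 1 < Nat.card E := Finite.one_lt_card
  rcases eq_or_ne f 0 with rfl | hf
  · have h₁ : Nat.card E ^ 2 ≠ 2 * Nat.card E - 1 := by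
      have : 2 * Nat.card E ≤ Nat.card E ^ 2 := by nlinarith
      omega
    have h₂ : Nat.card E ^ 2 ≠ 1 := by nlinarith
    rw [zeroCount_zero hV hn, if_pos rfl, if_neg h₁, if_neg h₂]
    push_cast
    ring
  have hsub : ((2 * Nat.card E - 1 : ℕ) : ℤ) = 2 * Nat.card E - 1 := by omega
  by_cases hfn : f n = 0
  · rw [zeroCount_eq_card_of_apply_nucleus_eq_zero hV hn hf hfn, if_neg hf, if_neg (by omega),
      if_neg hq.ne']
    ring
  · rcases zeroCount_eq_of_apply_nucleus_ne_zero hV hn hfn with h | h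
    · rw [h, if_neg hf, if_neg (by omega), if_pos rfl]
      push_cast
      ring
    · rw [h, if_neg hf, if_pos rfl, if_neg (by omega), hsub]
      ring

open Finset Classical in
theorem sum_zeroCount [Fintype (Dual E V)] (hx : x ≠ 0) :
    ∑ f : Dual E V with f x = 0, (zeroCount Q f : ℤ) = Nat.card E ^ 3 +
      (Nat.card E ^ 2 - Nat.card E) * {v | Q v = 0 ∧ v ∈ Submodule.span E {x}}.ncard := by
  have : FiniteDimensional E V := .of_finrank_eq_succ hV
  have := Module.finite_of_finite E (M := V)
  have := Fintype.ofFinite V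
  have hzeros : #{v : V | Q v = 0} = Nat.card E ^ 2 := by
    rw [← zeroCount_zero hV hn, zeroCount, Set.ncard_eq_toFinset_card']
    simp
  have hcard (v : V) : (#{f : Dual E V | f x = 0 ∧ f v = 0} : ℤ) = Nat.card E +
      if v ∈ Submodule.span E {x} then (Nat.card E ^ 2 - Nat.card E : ℤ) else 0 := by
    have := ncard_apply_eq_zero_and_apply_eq_zero (y := v) hV hx
    rw [Set.ncard_eq_toFinset_card', Set.toFinset_ofPred] at this
    rw [this]
    split_ifs <;> simp
  have hdouble := sum_card_bipartiteAbove_eq_sum_card_bipartiteBelow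
    (s := {f : Dual E V | f x = 0}) (t := {v : V | Q v = 0}) (fun f v ↦ f v = 0)
  simp only [bipartiteAbove, bipartiteBelow, filter_filter] at hdouble
  calc ∑ f : Dual E V with f x = 0, (zeroCount Q f : ℤ)
    _ = ∑ f : Dual E V with f x = 0, (#{v | Q v = 0 ∧ f v = 0} : ℤ) := by
      simp [zeroCount, Set.ncard_eq_toFinset_card']
    _ = ∑ v : V with Q v = 0, (#{f : Dual E V | f x = 0 ∧ f v = 0} : ℤ) := mod_cast hdouble
    _ = ∑ v : V with Q v = 0, (Nat.card E +
          if v ∈ Submodule.span E {x} then (Nat.card E ^ 2 - Nat.card E : ℤ) else 0) :=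
      sum_congr rfl fun v _ ↦ hcard v
    _ = _ := by
      simp [sum_add_distrib, hzeros, ← sum_filter, filter_filter, Set.ncard_eq_toFinset_card']
      ring

open Classical in
theorem ncard_secants_sub_ncard_externals (hx : x ≠ 0) :
    ((pencil Q x (2 * Nat.card E - 1)).ncard - (pencil Q x 1).ncard : ℤ) =
      if Q x = 0 then (Nat.card E * (Nat.card E - 1) : ℤ) else 0 := by
  have : FiniteDimensional E V := .of_finrank_eq_succ hV
  have := Module.finite_of_finite E (M := Dual E V)
  have := Fintype.ofFinite (Dual E V)
  have hsum := sum_zeroCount hV hn hx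
  have hq : (Nat.card E - 1 : ℤ) ≠ 0 := by
    have : 1 < Nat.card E := Finite.one_lt_card
    omega
  have hlines : Finset.card {f : Dual E V | f x = 0} = Nat.card E ^ 2 := by
    rw [← ncard_apply_eq_zero hV hx, Set.ncard_eq_toFinset_card', Set.toFinset_ofPred]
  have hpencil (k : ℕ) :
      Finset.card {f : Dual E V | f x = 0 ∧ zeroCount Q f = k} = (pencil Q x k).ncard := by
    rw [pencil, Set.ncard_eq_toFinset_card', Set.toFinset_ofPred]
  have hzero : Finset.card {f : Dual E V | f x = 0 ∧ f = 0} = 1 := by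
    rw [Finset.card_eq_one]
    exact ⟨0, by ext; simp +contextual⟩
  rw [Finset.sum_congr rfl fun f _ ↦ zeroCount_eq hV hn f, Finset.sum_add_distrib,
    ← Finset.mul_sum, Finset.sum_sub_distrib, Finset.sum_add_distrib, ← Finset.mul_sum,
    Finset.sum_boole, Finset.sum_boole, Finset.sum_boole, Finset.filter_filter,
    Finset.filter_filter, Finset.filter_filter, hpencil, hpencil, hzero, Finset.sum_const, hlines,
    ncard_eq_zero_and_mem_span Q hx] at hsum
  refine mul_left_cancel₀ hq ?_
  split_ifs at hsum ⊢ <;> push_cast at hsum <;> linear_combination hsum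

theorem apply_nucleus_ne_zero_iff {f : Dual E V} :
    f n ≠ 0 ↔ zeroCount Q f = 2 * Nat.card E - 1 ∨ zeroCount Q f = 1 := by
  refine ⟨fun h ↦ (zeroCount_eq_of_apply_nucleus_ne_zero hV hn h).symm, fun h hfn ↦ ?_⟩
  have hq : 1 < Nat.card E := Finite.one_lt_card
  rcases eq_or_ne f 0 with rfl | hf
  · rw [zeroCount_zero hV hn] at h
    have : 2 * Nat.card E ≤ Nat.card E ^ 2 := by nlinarith
    omega
  · rw [zeroCount_eq_card_of_apply_nucleus_eq_zero hV hn hf hfn] at h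
    omega

theorem zeroCount_eq_card_iff {f : Dual E V} (hf : f ≠ 0) :
    zeroCount Q f = Nat.card E ↔ f n = 0 := by
  refine ⟨fun h ↦ ?_, zeroCount_eq_card_of_apply_nucleus_eq_zero hV hn hf⟩
  have hq : 1 < Nat.card E := Finite.one_lt_card
  by_contra hfn
  rcases (apply_nucleus_ne_zero_iff hV hn).1 hfn with h' | h' <;> omega

open Classical in
theorem ncard_secants_add_ncard_externals (hx : x ≠ 0) :
    ((pencil Q x (2 * Nat.card E - 1)).ncard + (pencil Q x 1).ncard : ℤ) =
      if n ∈ Submodule.span E {x} then 0 else (Nat.card E * (Nat.card E - 1) : ℤ) := by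
  have : FiniteDimensional E V := .of_finrank_eq_succ hV
  have := Module.finite_of_finite E (M := Dual E V)
  have hq : 1 < Nat.card E := Finite.one_lt_card
  have hunion : {f : Dual E V | f x = 0 ∧ f n = 0} ∪
      (pencil Q x (2 * Nat.card E - 1) ∪ pencil Q x 1) = {f | f x = 0} := by
    ext f
    have := apply_nucleus_ne_zero_iff hV hn (f := f)
    simp only [pencil, Set.mem_union, Set.mem_ofPred_eq]
    tauto
  have htangents : Disjoint {f : Dual E V | f x = 0 ∧ f n = 0}
      (pencil Q x (2 * Nat.card E - 1) ∪ pencil Q x 1) :=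
    Set.disjoint_left.2 fun f hf hf' ↦ (apply_nucleus_ne_zero_iff hV hn).2
      (hf'.imp And.right And.right) hf.2
  have hpencils : Disjoint (pencil Q x (2 * Nat.card E - 1)) (pencil Q x 1) :=
    Set.disjoint_left.2 fun f hf hf' ↦ by
      have := hf.2.symm.trans hf'.2
      omega
  have hcard := congrArg Set.ncard hunion
  rw [Set.ncard_union_eq htangents, Set.ncard_union_eq hpencils, ncard_apply_eq_zero hV hx,
    ncard_apply_eq_zero_and_apply_eq_zero hV hx] at hcard
  zify at hcard
  split_ifs at hcard ⊢ <;> linear_combination hcard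

end Conic

section TraceForm

open Module QuadraticMap

variable (E F : Type*) [Field E] [Finite E] [Field F] [Algebra E F]

/-- The quadratic form `u ↦ Tr (u ^ (q + 1))` of an extension `F` of a field `E` with `q`
elements. -/
def traceQuadraticForm : QuadraticForm E F :=
  let := Fintype.ofFinite E
  LinearMap.BilinMap.toQuadraticMap
    ((Algebra.traceForm E F).compl₂ (FiniteField.frobeniusAlgHom E F).toLinearMap)

variable {E F}

theorem traceQuadraticForm_apply (u : F) :
    traceQuadraticForm E F u = Algebra.trace E F (u * u ^ Nat.card E) := by
  simp [traceQuadraticForm, Algebra.traceForm_apply, Fintype.card_eq_nat_card]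

theorem trace_pow_card [FiniteDimensional E F] (x : F) :
    Algebra.trace E F (x ^ Nat.card E) = Algebra.trace E F x := by
  let := Fintype.ofFinite E
  rw [Nat.card_eq_fintype_card]
  exact Algebra.trace_eq_of_algEquiv (FiniteField.frobeniusAlgEquivOfAlgebraic E F) x

variable (hF : finrank E F = 3)
include hF

theorem algebraMap_trace_of_finrank_eq_three (x : F) :
    algebraMap E F (Algebra.trace E F x) = x + x ^ Nat.card E + x ^ Nat.card E ^ 2 := by
  have : FiniteDimensional E F := .of_finrank_eq_succ hF
  have : Finite F := Module.finite_of_finite E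
  rw [FiniteField.algebraMap_trace_eq_sum_pow, hF]
  simp [Finset.sum_range_succ]

theorem algebraMap_norm_of_finrank_eq_three (x : F) :
    algebraMap E F (Algebra.norm E x) = x * x ^ Nat.card E * x ^ Nat.card E ^ 2 := by
  have : FiniteDimensional E F := .of_finrank_eq_succ hF
  have : Finite F := Module.finite_of_finite E
  rw [FiniteField.algebraMap_norm_eq_prod_pow, hF]
  simp [Finset.prod_range_succ]

theorem pow_card_pow_three (x : F) : x ^ Nat.card E ^ 3 = x := by
  have : FiniteDimensional E F := .of_finrank_eq_succ hF
  have : Finite F := Module.finite_of_finite E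
  have := Fintype.ofFinite F
  rw [← hF, ← natCard_eq_pow_finrank, Nat.card_eq_fintype_card, FiniteField.pow_card]

theorem polar_traceQuadraticForm (x y : F) :
    polar (traceQuadraticForm E F) x y =
      Algebra.trace E F x * Algebra.trace E F y - Algebra.trace E F (x * y) := by
  have : FiniteDimensional E F := .of_finrank_eq_succ hF
  have hpolar : polar (traceQuadraticForm E F) x y =
      Algebra.trace E F (x * y ^ Nat.card E) + Algebra.trace E F (y * x ^ Nat.card E) := by
    simp [traceQuadraticForm, Algebra.traceForm_apply, LinearMap.BilinMap.polar_toQuadraticMap,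
      Fintype.card_eq_nat_card]
  have hcube : Algebra.trace E F (x ^ Nat.card E ^ 2 * y) =
      Algebra.trace E F (x * y ^ Nat.card E) := by
    rw [← trace_pow_card, mul_pow, ← pow_mul, ← pow_succ, pow_card_pow_three hF]
  have hprod : Algebra.trace E F x * Algebra.trace E F y = Algebra.trace E F (x * y) +
      Algebra.trace E F (x ^ Nat.card E * y) + Algebra.trace E F (x ^ Nat.card E ^ 2 * y) := by
    rw [← smul_eq_mul, ← map_smul, Algebra.smul_def, algebraMap_trace_of_finrank_eq_three hF,
      add_mul, add_mul, map_add, map_add]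
  rw [hpolar, hprod, hcube, mul_comm y]
  ring

theorem isNucleus_traceQuadraticForm [CharP E 2] : IsNucleus (traceQuadraticForm E F) 1 := by
  have : FiniteDimensional E F := .of_finrank_eq_succ hF
  have trace_one : Algebra.trace E F 1 = 1 := by
    rw [← map_one (algebraMap E F), Algebra.trace_algebraMap, hF, succ_nsmul, two_nsmul,
      CharTwo.add_self_eq_zero, zero_add]
  refine ⟨le_antisymm (fun x hx ↦ ?_) ?_, ?_⟩
  · have hpolar (y : F) :
        Algebra.trace E F x * Algebra.trace E F y = Algebra.trace E F (x * y) := by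
      rw [← sub_eq_zero, ← polar_traceQuadraticForm hF]
      exact DFunLike.congr_fun (LinearMap.mem_ker.1 hx) y
    have hradical : x - algebraMap E F (Algebra.trace E F x) = 0 := by
      refine (traceForm_nondegenerate E F).1 _ fun y ↦ ?_
      rw [Algebra.traceForm_apply, sub_mul, map_sub, ← Algebra.smul_def, map_smul, smul_eq_mul,
        hpolar, sub_self]
    rw [sub_eq_zero, Algebra.algebraMap_eq_smul_one] at hradical
    exact Submodule.mem_span_singleton.2 ⟨_, hradical.symm⟩
  · rw [Submodule.span_singleton_le_iff_mem, LinearMap.mem_ker]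
    ext y
    rw [polarBilin_apply_apply, polar_traceQuadraticForm hF, trace_one, one_mul, one_mul, sub_self,
      LinearMap.zero_apply]
  · rw [traceQuadraticForm_apply, one_pow, mul_one, trace_one]
    exact one_ne_zero

theorem traceQuadraticForm_eq_norm_mul_trace_inv (x : F) :
    traceQuadraticForm E F x = Algebra.norm E x * Algebra.trace E F x⁻¹ := by
  have : FiniteDimensional E F := .of_finrank_eq_succ hF
  rcases eq_or_ne x 0 with rfl | hx
  · simp
  have hinv : algebraMap E F (Algebra.norm E x) * x⁻¹ = (x * x ^ Nat.card E) ^ Nat.card E := by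
    rw [algebraMap_norm_of_finrank_eq_three hF]
    field_simp
    ring
  rw [traceQuadraticForm_apply, ← trace_pow_card, ← hinv, ← Algebra.smul_def, map_smul, smul_eq_mul]

end TraceForm

section CyclotomicIndex

variable {E F : Type*} [Field E] [Field F] [Finite F] [Algebra E F] {M : ℕ}
  (hM : M * (Nat.card E - 1) = Nat.card F - 1)

include hM

theorem pow_eq_algebraMap_norm (x : F) : x ^ M = algebraMap E F (Algebra.norm E x) := by
  have : Finite E := .of_injective _ (algebraMap E F).injective
  have hq : 0 < Nat.card E - 1 := Nat.sub_pos_of_lt Finite.one_lt_card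
  rw [FiniteField.algebraMap_norm_eq_pow, ← hM, Nat.mul_div_cancel _ hq]

theorem pow_eq_norm_pow_smul_pow_val (x : F) (k : ℕ) :
    x ^ k = Algebra.norm E x ^ (k / M) • x ^ (k : ZMod M).val := by
  rw [Algebra.smul_def, map_pow, ← pow_eq_algebraMap_norm hM, ← pow_mul, ← pow_add,
    ZMod.val_natCast, Nat.div_add_mod]

variable [NeZero M]

theorem pow_val_mul_pow_val (x : F) (i j : ZMod M) :
    x ^ i.val * x ^ j.val = Algebra.norm E x ^ ((i.val + j.val) / M) • x ^ (i + j).val := by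
  rw [← pow_add, pow_eq_norm_pow_smul_pow_val hM x (i.val + j.val), Nat.cast_add,
    ZMod.natCast_zmod_val, ZMod.natCast_zmod_val]

variable {ω : F} (hω₀ : ω ≠ 0)

include hω₀

theorem trace_pow_val_add_eq_zero_iff (i j : ZMod M) :
    Algebra.trace E F (ω ^ (i + j).val) = 0 ↔ Algebra.trace E F (ω ^ i.val * ω ^ j.val) = 0 := by
  have hnorm : Algebra.norm E ω ≠ 0 := Algebra.norm_ne_zero_iff.2 hω₀
  rw [pow_val_mul_pow_val hM, map_smul, smul_eq_zero, or_iff_right (pow_ne_zero _ hnorm)]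

theorem trace_pow_val_neg_eq_zero_iff (a : ZMod M) :
    Algebra.trace E F (ω ^ (-a).val) = 0 ↔ Algebra.trace E F (ω ^ a.val)⁻¹ = 0 := by
  have hnorm : Algebra.norm E ω ≠ 0 := Algebra.norm_ne_zero_iff.2 hω₀
  have h := pow_val_mul_pow_val hM ω (-a) a
  rw [neg_add_cancel, ZMod.val_zero, pow_zero, ← eq_mul_inv_iff_mul_eq₀ (pow_ne_zero _ hω₀),
    smul_mul_assoc, one_mul] at h
  rw [h, map_smul, smul_eq_zero, or_iff_right (pow_ne_zero _ hnorm)]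

variable (hω : ∀ x : F, x ≠ 0 → ∃ n : ℕ, x = ω ^ n)

include hω

theorem bijOn_smul_pow_val :
    Set.BijOn (fun p : Eˣ × ZMod M ↦ (p.1 : E) • ω ^ p.2.val) Set.univ {0}ᶜ := by
  have : Finite E := .of_injective _ (algebraMap E F).injective
  have hmaps : Set.MapsTo (fun p : Eˣ × ZMod M ↦ (p.1 : E) • ω ^ p.2.val) Set.univ {0}ᶜ :=
    fun p _ ↦ smul_ne_zero p.1.ne_zero (pow_ne_zero _ hω₀)
  have hsurj : Set.SurjOn (fun p : Eˣ × ZMod M ↦ (p.1 : E) • ω ^ p.2.val) Set.univ {0}ᶜ := by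
    intro x hx
    obtain ⟨k, rfl⟩ := hω x hx
    refine ⟨(Units.mk0 _ (Algebra.norm_ne_zero_iff.2 hω₀) ^ (k / M), k), trivial, ?_⟩
    exact (pow_eq_norm_pow_smul_pow_val hM ω k).symm
  refine ⟨hmaps, Set.injOn_of_ncard_image_eq ?_, hsurj⟩
  rw [hsurj.image_eq_of_mapsTo hmaps, Set.ncard_univ, Nat.card_prod, Nat.card_units, Nat.card_zmod,
    mul_comm, hM, Set.ncard_compl, Set.ncard_singleton]

theorem one_mem_span_pow_val_iff (a : ZMod M) :
    (1 : F) ∈ Submodule.span E {ω ^ a.val} ↔ a = 0 := by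
  refine ⟨fun h ↦ ?_, ?_⟩
  · obtain ⟨e, he⟩ := Submodule.mem_span_singleton.1 h
    have he₀ : e ≠ 0 := by
      rintro rfl
      simp at he
    have hpair : (Units.mk0 e he₀, a) = ((1, 0) : Eˣ × ZMod M) :=
      (bijOn_smul_pow_val hM hω₀ hω).injOn trivial trivial (by simpa using he)
    exact congrArg Prod.snd hpair
  · rintro rfl
    simp [Submodule.mem_span_singleton_self]

theorem ncard_eq_ncard_pow_val_mul {P : F → Prop} (h₀ : ¬ P 0)
    (hP : ∀ (e : E) (x : F), e ≠ 0 → (P (e • x) ↔ P x)) :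
    {x | P x}.ncard = {j : ZMod M | P (ω ^ j.val)}.ncard * (Nat.card E - 1) := by
  have hbij := bijOn_smul_pow_val (E := E) hM hω₀ hω
  have himage : {x | P x} = (fun p : Eˣ × ZMod M ↦ (p.1 : E) • ω ^ p.2.val) ''
      (Set.univ ×ˢ {j : ZMod M | P (ω ^ j.val)}) := by
    ext x
    constructor
    · intro (hx : P x)
      obtain ⟨⟨e, j⟩, -, rfl⟩ := hbij.surjOn (show x ∈ ({0}ᶜ : Set F) by rintro rfl; exact h₀ hx)
      exact ⟨(e, j), ⟨trivial, (hP e _ e.ne_zero).1 hx⟩, rfl⟩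
    · rintro ⟨⟨e, j⟩, ⟨-, hj⟩, rfl⟩
      exact (hP e _ e.ne_zero).2 hj
  rw [himage, (hbij.injOn.mono (Set.subset_univ _)).ncard_image, Set.ncard_prod,
    Set.ncard_univ, Nat.card_units, mul_comm]

end CyclotomicIndex

section DifferenceCount

/-- The pairs in `A × B` with difference `a`; their number is the coefficient of `a` in the group
ring product `A * B ^ (-1)`. -/
def pairsWithDifference {G : Type*} [AddGroup G] (A B : Set G) (a : G) : Set (G × G) :=
  {p | p.1 ∈ A ∧ p.2 ∈ B ∧ p.1 - p.2 = a}

theorem ncard_pairsWithDifference {G : Type*} [AddGroup G] (A B : Set G) (a : G) :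
    (pairsWithDifference A B a).ncard = {j | a + j ∈ A ∧ j ∈ B}.ncard := by
  rw [← Set.ncard_image_of_injective {j | a + j ∈ A ∧ j ∈ B} (f := fun j ↦ (a + j, j))
    fun _ _ h ↦ congrArg Prod.snd h]
  congr 1
  ext ⟨i, j⟩
  simp only [pairsWithDifference, sub_eq_iff_eq_add, Set.mem_ofPred_eq, Set.mem_image, Prod.ext_iff]
  constructor
  · rintro ⟨hi, hj, rfl⟩
    exact ⟨j, ⟨hi, hj⟩, rfl, rfl⟩
  · rintro ⟨_, ⟨hi, hj⟩, rfl, rfl⟩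
    exact ⟨hi, hj, rfl⟩

open Module

variable {E F : Type*} [Field E] [Field F] [Finite F] [Algebra E F]

theorem ncard_pencil_eq_ncard_trace_mul (Q : QuadraticForm E F) (x : F) (k : ℕ) :
    (pencil Q x k).ncard =
      {c : F | Algebra.trace E F (c * x) = 0 ∧
        zeroCount Q (Algebra.traceForm E F c) = k}.ncard := by
  have : Finite E := .of_injective _ (algebraMap E F).injective
  let dual := LinearMap.BilinForm.toDual _ (traceForm_nondegenerate E F)
  rw [← Set.ncard_image_of_injective _ dual.injective]
  congr 1
  ext f
  obtain ⟨c, rfl⟩ := dual.surjective f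
  rw [dual.injective.mem_set_image]
  rfl

variable (E) in
/-- The exponents `j` modulo `M` for which exactly `k` zeros of the trace quadratic form lie on the
hyperplane `Tr (ω ^ j * u) = 0`. The sets `T₁`, `T₂`, `T₃` are the cases `k = q`, `2 * q - 1`, `1`;
they differ from the counts `|S_a|` by one because `0` is included here. -/
def lineIndices [Finite E] {M : ℕ} (ω : F) (k : ℕ) : Set (ZMod M) :=
  {j | zeroCount (traceQuadraticForm E F) (Algebra.traceForm E F (ω ^ j.val)) = k}

variable [Finite E] {M : ℕ} {ω : F}

theorem mem_lineIndices_card_iff [CharP E 2] (hF : finrank E F = 3) (hω₀ : ω ≠ 0) {j : ZMod M} :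
    j ∈ lineIndices E ω (Nat.card E) ↔ Algebra.trace E F (ω ^ j.val) = 0 := by
  have hne : Algebra.traceForm E F (ω ^ j.val) ≠ 0 := fun h ↦ by
    have := (traceForm_nondegenerate E F).1 (ω ^ j.val) fun c ↦ DFunLike.congr_fun h c
    exact pow_ne_zero _ hω₀ this
  refine (zeroCount_eq_card_iff hF (isNucleus_traceQuadraticForm hF) hne).trans ?_
  rw [Algebra.traceForm_apply, mul_one]

variable [NeZero M] (hM : M * (Nat.card E - 1) = Nat.card F - 1) (hω₀ : ω ≠ 0)

include hM hω₀

theorem traceQuadraticForm_pow_val_eq_zero_iff [CharP E 2] (hF : finrank E F = 3) (a : ZMod M) :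
    traceQuadraticForm E F (ω ^ a.val) = 0 ↔ -a ∈ lineIndices E ω (Nat.card E) := by
  have hnorm : Algebra.norm E (ω ^ a.val) ≠ 0 := Algebra.norm_ne_zero_iff.2 (pow_ne_zero _ hω₀)
  rw [mem_lineIndices_card_iff hF hω₀, trace_pow_val_neg_eq_zero_iff hM hω₀,
    traceQuadraticForm_eq_norm_mul_trace_inv hF, mul_eq_zero, or_iff_right hnorm]

variable (hω : ∀ x : F, x ≠ 0 → ∃ n : ℕ, x = ω ^ n)

include hω

variable [CharP E 2] (hF : finrank E F = 3) (a : ZMod M)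

include hF

theorem ncard_pairsWithDifference_mul {k : ℕ} (hk : k ≠ Nat.card E ^ 2) :
    (pairsWithDifference (lineIndices E ω (Nat.card E)) (lineIndices E ω k) a).ncard *
      (Nat.card E - 1) = (pencil (traceQuadraticForm E F) (ω ^ a.val) k).ncard := by
  simp only [ncard_pairsWithDifference, mem_lineIndices_card_iff hF hω₀, add_comm a,
    trace_pow_val_add_eq_zero_iff hM hω₀]
  rw [ncard_pencil_eq_ncard_trace_mul, ncard_eq_ncard_pow_val_mul hM hω₀ hω]
  · rfl
  · simp [zeroCount_zero hF (isNucleus_traceQuadraticForm hF), hk.symm]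
  · intro e c he
    rw [smul_mul_assoc, map_smul, map_smul, zeroCount_smul _ he, smul_eq_zero, or_iff_right he]

open Classical in
theorem ncard_secant_pairs_sub_ncard_external_pairs :
    ((pairsWithDifference (lineIndices E ω (Nat.card E))
          (lineIndices E ω (2 * Nat.card E - 1)) a).ncard -
        (pairsWithDifference (lineIndices E ω (Nat.card E)) (lineIndices E ω 1) a).ncard : ℤ) =
      if -a ∈ lineIndices E ω (Nat.card E) then (Nat.card E : ℤ) else 0 := by
  have hq : 1 < Nat.card E := Finite.one_lt_card
  have hsq : 2 * Nat.card E ≤ Nat.card E ^ 2 := by nlinarith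
  have hpencils := ncard_secants_sub_ncard_externals hF (isNucleus_traceQuadraticForm hF)
    (pow_ne_zero a.val hω₀)
  simp only [← ncard_pairsWithDifference_mul hM hω₀ hω hF a (show 2 * Nat.card E - 1 ≠ _ by omega),
    ← ncard_pairsWithDifference_mul hM hω₀ hω hF a (show 1 ≠ _ by omega),
    traceQuadraticForm_pow_val_eq_zero_iff hM hω₀ hF] at hpencils
  refine mul_right_cancel₀ (b := (Nat.card E - 1 : ℤ)) (by omega) ?_
  push_cast [Nat.cast_sub hq.le] at hpencils
  rw [ite_mul, zero_mul, ← hpencils, sub_mul]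

open Classical in
theorem ncard_secant_pairs_add_ncard_external_pairs :
    ((pairsWithDifference (lineIndices E ω (Nat.card E))
          (lineIndices E ω (2 * Nat.card E - 1)) a).ncard +
        (pairsWithDifference (lineIndices E ω (Nat.card E)) (lineIndices E ω 1) a).ncard : ℤ) =
      if a = 0 then 0 else (Nat.card E : ℤ) := by
  have hq : 1 < Nat.card E := Finite.one_lt_card
  have hsq : 2 * Nat.card E ≤ Nat.card E ^ 2 := by nlinarith
  have hpencils := ncard_secants_add_ncard_externals hF (isNucleus_traceQuadraticForm hF)
    (pow_ne_zero a.val hω₀)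
  simp only [← ncard_pairsWithDifference_mul hM hω₀ hω hF a (show 2 * Nat.card E - 1 ≠ _ by omega),
    ← ncard_pairsWithDifference_mul hM hω₀ hω hF a (show 1 ≠ _ by omega),
    one_mem_span_pow_val_iff hM hω₀ hω] at hpencils
  refine mul_right_cancel₀ (b := (Nat.card E - 1 : ℤ)) (by omega) ?_
  push_cast [Nat.cast_sub hq.le] at hpencils
  rw [ite_mul, zero_mul, ← hpencils, add_mul]

end DifferenceCount

section Indices

open Module

theorem ne_zero_of_forall_exists_eq_pow {F : Type*} [Field F] [Finite F] (hF : 2 < Nat.card F)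
    {ω : F} (hω : ∀ x : F, x ≠ 0 → ∃ n : ℕ, x = ω ^ n) : ω ≠ 0 := by
  rintro rfl
  have : Nontrivial Fˣ := Finite.one_lt_card_iff_nontrivial.1 (by rw [Nat.card_units]; omega)
  obtain ⟨u, hu⟩ := exists_ne (1 : Fˣ)
  obtain ⟨n, hn⟩ := hω u u.ne_zero
  rcases eq_or_ne n 0 with rfl | hn₀
  · exact hu (Units.ext (by rw [hn, pow_zero, Units.val_one]))
  · exact u.ne_zero (by rw [hn, zero_pow hn₀])

theorem exists_subfield_of_card {s : ℕ} (hs : 1 ≤ s) {F : Type*} [Field F] [Fintype F]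
    (hF : Fintype.card F = 2 ^ (3 * s)) :
    ∃ (E : Type) (_ : Field E) (_ : Finite E) (_ : Algebra E F),
      CharP E 2 ∧ Nat.card E = 2 ^ s ∧ finrank E F = 3 := by
  have : CharP F 2 := (CharP.charP_iff_prime_eq_zero Nat.prime_two).2 <| by
    have := FiniteField.cast_card_eq_zero F
    rw [hF] at this
    exact_mod_cast eq_zero_of_pow_eq_zero (by exact_mod_cast this)
  let := ZMod.algebra F 2
  have hs₀ : s ≠ 0 := by omega
  have hcard : Nat.card (GaloisField 2 s) = 2 ^ s := GaloisField.card 2 s hs₀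
  have hfinrank : finrank (ZMod 2) F = 3 * s := by
    have := natCard_eq_pow_finrank (K := ZMod 2) (V := F)
    rw [Nat.card_eq_fintype_card, hF, Nat.card_zmod] at this
    exact Nat.pow_right_injective le_rfl this.symm
  obtain ⟨φ⟩ := FiniteField.nonempty_algHom_of_finrank_dvd (F := ZMod 2) (K := GaloisField 2 s)
    (L := F) (by rw [GaloisField.finrank 2 hs₀, hfinrank]; exact dvd_mul_left s 3)
  let := φ.toRingHom.toAlgebra
  refine ⟨GaloisField 2 s, inferInstance, inferInstance, inferInstance, inferInstance, hcard, ?_⟩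
  have := natCard_eq_pow_finrank (K := GaloisField 2 s) (V := F)
  rw [Nat.card_eq_fintype_card, hF, hcard, ← pow_mul, mul_comm] at this
  exact Nat.eq_of_mul_eq_mul_left (by omega) (Nat.pow_right_injective le_rfl this.symm)

theorem Mof_mul_card_sub_one {E F : Type*} [Field E] [Field F] [Algebra E F] {s : ℕ}
    (hE : Nat.card E = 2 ^ s) (hF : finrank E F = 3) :
    Mof s * (Nat.card E - 1) = Nat.card F - 1 := by
  have : FiniteDimensional E F := .of_finrank_eq_succ hF
  rw [natCard_eq_pow_finrank (K := E) (V := F), hF, hE]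
  have hq : 1 ≤ 2 ^ s := Nat.one_le_two_pow
  have hq₃ : 1 ≤ (2 ^ s) ^ 3 := Nat.one_le_pow _ _ hq
  zify [hq, hq₃]
  ring

variable {E F : Type*} [Field E] [Finite E] [Field F] [Algebra E F] {s : ℕ}
  (hE : Nat.card E = 2 ^ s) (hF : finrank E F = 3)

include hE hF

theorem trFE_eq_zero_iff (x : F) : trFE s x = 0 ↔ Algebra.trace E F x = 0 := by
  rw [← map_eq_zero (algebraMap E F), algebraMap_trace_of_finrank_eq_three hF, hE, trFE,
    ← pow_mul, mul_comm s]

theorem ncard_Sa_add_one (ω : F) (k : ℕ) :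
    (Sa s ω k).ncard + 1 = zeroCount (traceQuadraticForm E F) (Algebra.traceForm E F (ω ^ k)) := by
  have : FiniteDimensional E F := .of_finrank_eq_succ hF
  have : Finite F := Module.finite_of_finite E
  have hSa : Sa s ω k = {u | traceQuadraticForm E F u = 0 ∧
      Algebra.traceForm E F (ω ^ k) u = 0} \ {0} := by
    ext u
    simp only [Sa, trFE_eq_zero_iff hE hF, traceQuadraticForm_apply, Algebra.traceForm_apply, hE,
      zpow_natCast, pow_succ', Set.mem_sdiff, Set.mem_ofPred_eq, Set.mem_singleton_iff]
    tauto
  rw [hSa, zeroCount]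
  exact Set.ncard_sdiff_singleton_add_one ⟨map_zero _, map_zero _⟩

theorem T1_eq_lineIndices (ω : F) : T1 s ω = lineIndices E ω (Nat.card E) := by
  ext j
  have hq : 0 < 2 ^ s := by positivity
  rw [T1, lineIndices, Set.mem_ofPred_eq, Set.mem_ofPred_eq, ← ncard_Sa_add_one hE hF, hE]
  omega

theorem T2_eq_lineIndices (ω : F) : T2 s ω = lineIndices E ω (2 * Nat.card E - 1) := by
  ext j
  have hq : 0 < 2 ^ s := by positivity
  rw [T2, lineIndices, Set.mem_ofPred_eq, Set.mem_ofPred_eq, ← ncard_Sa_add_one hE hF, hE]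
  omega

theorem T3_eq_lineIndices (ω : F) : T3 s ω = lineIndices E ω 1 := by
  ext j
  rw [T3, lineIndices, Set.mem_ofPred_eq, Set.mem_ofPred_eq, ← ncard_Sa_add_one hE hF]
  omega

end Indices

theorem statement10 (s : ℕ) (hs : 1 ≤ s) (F : Type*) [Field F] [Fintype F]
    (hF : Fintype.card F = 2 ^ (3 * s)) (ω : F)
    (hω : ∀ x : F, x ≠ 0 → ∃ n : ℕ, x = ω ^ n) :
    ∀ a : ZMod (Mof s),
      (({p : ZMod (Mof s) × ZMod (Mof s) | p.1 ∈ T1 s ω ∧ p.2 ∈ T2 s ω ∧ p.1 - p.2 = a}.ncard : ℤ) =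
        2 ^ (s - 1) * Ind (-a ∈ T1 s ω) + 2 ^ (s - 1) - 2 ^ (s - 1) * Ind (a = 0)) ∧
      (({p : ZMod (Mof s) × ZMod (Mof s) | p.1 ∈ T1 s ω ∧ p.2 ∈ T3 s ω ∧ p.1 - p.2 = a}.ncard : ℤ) =
        -(2 ^ (s - 1)) * Ind (-a ∈ T1 s ω) + 2 ^ (s - 1) - 2 ^ (s - 1) * Ind (a = 0)) := by
  intro a
  obtain ⟨E, _, _, _, _, hE, hrank⟩ := exists_subfield_of_card hs hF
  have hM : Mof s * (Nat.card E - 1) = Nat.card F - 1 := Mof_mul_card_sub_one hE hrank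
  have hcard : 2 < Nat.card F := by
    rw [Nat.card_eq_fintype_card, hF]
    exact lt_self_pow₀ one_lt_two (by omega)
  have hω₀ := ne_zero_of_forall_exists_eq_pow hcard hω
  have hsub := ncard_secant_pairs_sub_ncard_external_pairs hM hω₀ hω hrank a
  have hadd := ncard_secant_pairs_add_ncard_external_pairs hM hω₀ hω hrank a
  have hq : (Nat.card E : ℤ) = 2 * 2 ^ (s - 1) := by
    rw [hE, ← pow_succ', Nat.sub_add_cancel hs, Nat.cast_pow, Nat.cast_ofNat]
  rw [← T1_eq_lineIndices hE hrank, ← T2_eq_lineIndices hE hrank, ← T3_eq_lineIndices hE hrank,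
    hq] at hsub hadd
  unfold pairsWithDifference at hsub hadd
  unfold Ind
  constructor <;> split_ifs at hsub hadd ⊢ <;> linarith
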